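/- arXiv:math/9807055 — 2 statements merged into one kernel-verified Lean document; each statement's English description precedes it below -/
import Mathlib

section
/- Let A and B be 3 × 3 real symmetric matrices with trace A = trace B = 0, let λ₊ be the smallest eigenvalue of A and λ₋ the smallest eigenvalue of B, and let s be a real number. If s/6 + λ₊ + λ₋ ≥ 0, then s/√6 ≥ ‖A‖_F + ‖B‖_F. -/
open Matrix

theorem trace_sq_eq_aux (A : Matrix (Fin 3) (Fin 3) ℝ) (hA : A.IsHermitian) :
    (Aᵀ * A).trace = ∑ i, hA.eigenvalues i ^ 2 := by
  have hT : Aᵀ = A := by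
    have := hA.eq
    rwa [conjTranspose_eq_transpose_of_trivial] at this
  rw [hT]
  conv_lhs => rw [hA.spectral_theorem, ← map_mul, Unitary.conjStarAlgAut_apply, trace_mul_cycle,
    Unitary.coe_star_mul_self, one_mul, diagonal_mul_diagonal, trace_diagonal]
  simp [pow_two]

theorem sqrt_trace_le_aux (A : Matrix (Fin 3) (Fin 3) ℝ) (hA : A.IsHermitian)
    (htr : A.trace = 0) (l : ℝ) (hl : IsLeast (Set.range hA.eigenvalues) l) :
    Real.sqrt ((Aᵀ * A).trace) ≤ Real.sqrt 6 * (-l) := by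
  rw [trace_sq_eq_aux A hA]
  have h0 := hl.2 ⟨0, rfl⟩
  have h1 := hl.2 ⟨1, rfl⟩
  have h2 := hl.2 ⟨2, rfl⟩
  have ht := hA.trace_eq_sum_eigenvalues
  rw [htr] at ht
  simp only [Fin.sum_univ_three, RCLike.ofReal_real_eq_id, id] at ht ⊢
  obtain ⟨i, hi⟩ := hl.1
  have hneg : 0 ≤ -l := by linarith
  have key : hA.eigenvalues 0 ^ 2 + hA.eigenvalues 1 ^ 2 + hA.eigenvalues 2 ^ 2 ≤ 6 * (-l) ^ 2 := by
    generalize hA.eigenvalues = e at *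
    have h3 : (e 0 = l ∨ e 1 = l) ∨ e 2 = l := by fin_cases i <;> simp_all
    rcases h3 with (h3 | h3) | h3
    · have : e 2 = - l - e 1 := by linarith
      rw [this] at h2 ⊢
      rw [h3]
      nlinarith [mul_nonneg (sub_nonneg.2 h1) (sub_nonneg.2 h2)]
    · have : e 2 = - l - e 0 := by linarith
      rw [this] at h2 ⊢
      rw [h3]
      nlinarith [mul_nonneg (sub_nonneg.2 h0) (sub_nonneg.2 h2)]
    · have : e 1 = - l - e 0 := by linarith
      rw [this] at h1 ⊢
      rw [h3]
      nlinarith [mul_nonneg (sub_nonneg.2 h0) (sub_nonneg.2 h1)]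
  calc _ ≤ Real.sqrt (6 * (-l) ^ 2) := Real.sqrt_le_sqrt key
    _ = _ := by rw [Real.sqrt_mul (by norm_num), Real.sqrt_sq hneg]

/-- Algebraic core of Lemma 1: if `A`, `B` are trace-free 3×3 real symmetric matrices with
smallest eigenvalues `lamP`, `lamM` respectively, and `s/6 + lamP + lamM ≥ 0`, then
`s/√6 ≥ ‖A‖_F + ‖B‖_F`, where `‖A‖_F = √(trace (Aᵀ A))`. -/
theorem scalar_ge_sum_frobenius
    (A B : Matrix (Fin 3) (Fin 3) ℝ) (hA : A.IsHermitian) (hB : B.IsHermitian)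
    (htrA : A.trace = 0) (htrB : B.trace = 0)
    (lamP lamM s : ℝ)
    (hlamP : IsLeast (Set.range hA.eigenvalues) lamP)
    (hlamM : IsLeast (Set.range hB.eigenvalues) lamM)
    (h : s / 6 + lamP + lamM ≥ 0) :
    s / Real.sqrt 6 ≥ Real.sqrt ((Aᵀ * A).trace) + Real.sqrt ((Bᵀ * B).trace) := by
  have ha := sqrt_trace_le_aux A hA htrA lamP hlamP
  have hb := sqrt_trace_le_aux B hB htrB lamM hlamM
  have h6 : 0 < Real.sqrt 6 := by positivity
  have hs : s / Real.sqrt 6 = Real.sqrt 6 * (s / 6) := by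
    have := Real.mul_self_sqrt (show (0 : ℝ) ≤ 6 by norm_num)
    rw [div_eq_iff h6.ne']
    linear_combination (-s / 6) * this
  rw [hs]
  nlinarith [mul_nonneg h6.le h]
end

section
/- Let a, b, c be real numbers with a + b + c = 0. Then 3√6 · abc = (a² + b² + c²)^{3/2} holds if and only if there exists t ≥ 0 such that, as a multiset, {a, b, c} = {2t, −t, −t}; in particular, equality forces at most two distinct values among a, b, c. -/
lemma aux_two (a b c : ℝ) (hsum : a + b + c = 0)
    (h : 3 * Real.sqrt 6 * (a * b * c) = Real.sqrt (a ^ 2 + b ^ 2 + c ^ 2) ^ 3) :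
    0 ≤ a * b * c ∧ (a = b ∨ b = c ∨ a = c) := by
  have hS : 0 ≤ a ^ 2 + b ^ 2 + c ^ 2 := by positivity
  have h6 : Real.sqrt 6 ^ 2 = 6 := Real.sq_sqrt (by norm_num)
  have hq := Real.sq_sqrt hS
  have h6p : 0 < 3 * Real.sqrt 6 := by positivity
  constructor
  · have : 0 ≤ 3 * Real.sqrt 6 * (a * b * c) := by rw [h]; positivity
    exact nonneg_of_mul_nonneg_right this h6p
  · have e : 54 * (a * b * c) ^ 2 = (a ^ 2 + b ^ 2 + c ^ 2) ^ 3 := by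
      calc 54 * (a * b * c) ^ 2 = 9 * Real.sqrt 6 ^ 2 * (a * b * c) ^ 2 := by rw [h6]; ring
        _ = (3 * Real.sqrt 6 * (a * b * c)) ^ 2 := by ring
        _ = (Real.sqrt (a ^ 2 + b ^ 2 + c ^ 2) ^ 2) ^ 3 := by rw [h]; ring
        _ = _ := by rw [hq]
    have hc : c = -a - b := by linarith
    have d : ((a - b) * (b - c) * (a - c)) ^ 2 = 0 := by
      subst hc
      linear_combination (-1 / 2 : ℝ) * e
    have d' := pow_eq_zero_iff (two_ne_zero) |>.1 d
    rcases mul_eq_zero.1 d' with d1 | d1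
    · rcases mul_eq_zero.1 d1 with d2 | d2
      · left; linarith
      · right; left; linarith
    · right; right; linarith

lemma aux_sign (x : ℝ) (h : 0 ≤ x * x * (-2 * x)) : 0 ≤ -x := by
  by_contra hx
  have hx' : 0 < x := by linarith
  have : 0 < x * x * x := by positivity
  linarith

/-- Equality case of the sharp inequality `3√6·abc ≤ (a² + b² + c²)^(3/2)` for reals summing
to zero: equality holds iff, as a multiset, `{a, b, c} = {2t, −t, −t}` for some `t ≥ 0`;
in particular, equality forces at most two distinct values among `a`, `b`, `c`. -/
theorem det_equality_case_scalar (a b c : ℝ) (hsum : a + b + c = 0) :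
    (3 * Real.sqrt 6 * (a * b * c) = Real.sqrt (a ^ 2 + b ^ 2 + c ^ 2) ^ 3 ↔
      ∃ t : ℝ, 0 ≤ t ∧ ({a, b, c} : Multiset ℝ) = ({2 * t, -t, -t} : Multiset ℝ)) ∧
    (3 * Real.sqrt 6 * (a * b * c) = Real.sqrt (a ^ 2 + b ^ 2 + c ^ 2) ^ 3 →
      a = b ∨ b = c ∨ a = c) := by
  refine ⟨⟨fun h => ?_, ?_⟩, fun h => (aux_two a b c hsum h).2⟩
  · obtain ⟨hp, h1 | h1 | h1⟩ := aux_two a b c hsum h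
    · subst h1
      have hc : c = 2 * -a := by linarith
      subst hc
      refine ⟨-a, aux_sign a (by linarith), ?_⟩
      rw [neg_neg]
      simp only [Multiset.insert_eq_cons]
      rw [← Multiset.cons_zero, ← Multiset.cons_zero, Multiset.cons_swap a (2 * -a),
        Multiset.cons_swap a (2 * -a)]
    · subst h1
      have hc : a = 2 * -b := by linarith
      subst hc
      exact ⟨-b, aux_sign b (by linarith), by rw [neg_neg]⟩
    · subst h1
      have hc : b = 2 * -a := by linarith
      subst hc
      refine ⟨-a, aux_sign a (by linarith), ?_⟩
      rw [neg_neg]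
      simp only [Multiset.insert_eq_cons]
      rw [Multiset.cons_swap a (2 * -a)]
  · rintro ⟨t, ht, h⟩
    have h1 := congrArg Multiset.prod h
    have h2 := congrArg (fun s => (Multiset.map (fun x : ℝ => x ^ 2) s).sum) h
    simp only [Multiset.insert_eq_cons, Multiset.map_cons, Multiset.map_singleton,
      Multiset.sum_cons, Multiset.sum_singleton, Multiset.prod_cons,
      Multiset.prod_singleton] at h1 h2
    have e1 : a * b * c = 2 * t ^ 3 := by linear_combination h1
    have e2 : a ^ 2 + b ^ 2 + c ^ 2 = 6 * t ^ 2 := by linear_combination h2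
    have h6 : Real.sqrt 6 ^ 2 = 6 := Real.sq_sqrt (by norm_num)
    rw [e1, e2, Real.sqrt_mul (by norm_num), Real.sqrt_sq ht]
    linear_combination (-Real.sqrt 6 * t ^ 3) * h6
end
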